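/- arXiv:2510.25995 — 3 statements merged into one kernel-verified Lean document; each statement's English description precedes it below -/
import Mathlib

section
/- Let $V_1, V_2$ be nonzero finite-dimensional complex vector spaces and let $A_i \in \mathrm{End}_{\mathbf C}(V_i)$ for $i=1,2$ have minimal polynomials $b_i(s) = \prod_{\gamma \in \mathbf C} (s+\gamma)^{m^{(i)}_\gamma}$ (where $m^{(i)}_\gamma = 0$ for all but finitely many $\gamma$). Then the minimal polynomial of the endomorphism $A_1 \otimes \mathrm{id} + \mathrm{id} \otimes A_2$ of $V_1 \otimes_{\mathbf C} V_2$ is $\prod_{\gamma \in \mathbf C}(s+\gamma)^{m_\gamma}$, where $m_\gamma = \max\{\, m^{(1)}_\alpha + m^{(2)}_\beta - 1 \mid m^{(1)}_\alpha > 0,\ m^{(2)}_\beta > 0,\ \alpha + \beta = \gamma \,\}$ (and $m_\gamma = 0$ if no such pair $(\alpha,\beta)$ exists). -/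
open Polynomial
open scoped TensorProduct

/-!
For an algebraic endomorphism `A`, the multiplicity of `μ` in the minimal polynomial is the least
`n` such that `(A - μ) ^ n` kills the whole generalized eigenspace at `μ`. Put
`T = A₁ ⊗ 1 + 1 ⊗ A₂`. On the tensor product of the generalized eigenspaces of `A₁` at `α` and of
`A₂` at `β`, the endomorphism `T - (α + β)` is the sum of the commuting nilpotents
`N₁ = (A₁ - α) ⊗ 1` and `N₂ = 1 ⊗ (A₂ - β)`. If these have orders `k + 1` and `l + 1`, then in the
binomial expansion of `(N₁ + N₂) ^ (k + l)` the single term `(k + l).choose k • N₁ ^ k * N₂ ^ l`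
survives; it is nonzero in characteristic zero, while the next power vanishes. The spaces of this
kind with `α + β = γ` span the generalized eigenspace of `T` at `γ`.
-/

section GeneralizedEigenspaces

open Module.End

variable {K V : Type*} [Field K] [AddCommGroup V] [Module K V] {A : Module.End K V} {μ : K} {n : ℕ}

theorem ker_aeval_X_sub_C_pow (A : Module.End K V) (μ : K) (n : ℕ) :
    LinearMap.ker (aeval A ((X - C μ) ^ n)) = A.genEigenspace μ n := by
  simp [genEigenspace_nat, Algebra.algebraMap_eq_smul_one]

theorem maxGenEigenspace_le_genEigenspace_rootMultiplicity_minpoly (hA : IsIntegral K A) (μ : K) :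
    A.maxGenEigenspace μ ≤ A.genEigenspace μ ((minpoly K A).rootMultiplicity μ) := by
  obtain ⟨q, hq, hμq⟩ :=
    exists_eq_pow_rootMultiplicity_mul_and_not_dvd (minpoly K A) (minpoly.ne_zero hA) μ
  set m := (minpoly K A).rootMultiplicity μ
  intro v hv
  obtain ⟨k, hk⟩ := (mem_maxGenEigenspace A μ v).1 hv
  have hcoprime : IsCoprime ((X - C μ) ^ k) q :=
    ((irreducible_X_sub_C μ).coprime_iff_not_dvd.2 hμq).pow_left
  have hk_ker : aeval A ((X - C μ) ^ m) v ∈ LinearMap.ker (aeval A ((X - C μ) ^ k)) := by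
    have hv_ker : v ∈ LinearMap.ker (aeval A ((X - C μ) ^ k)) := by
      rwa [ker_aeval_X_sub_C_pow, mem_genEigenspace_nat]
    rw [LinearMap.mem_ker, ← Module.End.mul_apply, ← map_mul, mul_comm, map_mul,
      Module.End.mul_apply, LinearMap.mem_ker.1 hv_ker, map_zero]
  have hq_ker : aeval A ((X - C μ) ^ m) v ∈ LinearMap.ker (aeval A q) := by
    rw [LinearMap.mem_ker, ← Module.End.mul_apply, ← map_mul, mul_comm, ← hq, minpoly.aeval,
      LinearMap.zero_apply]
  rw [← ker_aeval_X_sub_C_pow, LinearMap.mem_ker]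
  exact Submodule.disjoint_def.1 (disjoint_ker_aeval_of_isCoprime A hcoprime) _ hk_ker hq_ker

theorem rootMultiplicity_minpoly_le_iff_maxGenEigenspace_le (hA : IsIntegral K A) :
    (minpoly K A).rootMultiplicity μ ≤ n ↔ A.maxGenEigenspace μ ≤ A.genEigenspace μ n := by
  refine ⟨fun h ↦ (maxGenEigenspace_le_genEigenspace_rootMultiplicity_minpoly hA μ).trans
    ((A.genEigenspace μ).monotone (by exact_mod_cast h)), fun h ↦ ?_⟩
  obtain ⟨q, hq, -⟩ :=
    exists_eq_pow_rootMultiplicity_mul_and_not_dvd (minpoly K A) (minpoly.ne_zero hA) μ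
  set m := (minpoly K A).rootMultiplicity μ
  have hq0 : q ≠ 0 := right_ne_zero_of_mul (hq ▸ minpoly.ne_zero hA)
  have hann : aeval A ((X - C μ) ^ n * q) = 0 := by
    ext v
    have hv : aeval A q v ∈ A.genEigenspace μ m := by
      rw [← ker_aeval_X_sub_C_pow, LinearMap.mem_ker, ← Module.End.mul_apply, ← map_mul, ← hq,
        minpoly.aeval, LinearMap.zero_apply]
    have := h (genEigenspace_le_maximal A μ m hv)
    rwa [← ker_aeval_X_sub_C_pow, LinearMap.mem_ker, ← Module.End.mul_apply, ← map_mul] at this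
  have hdvd : (X - C μ) ^ m * q ∣ (X - C μ) ^ n * q := hq ▸ minpoly.dvd K A hann
  exact (pow_dvd_pow_iff (X_sub_C_ne_zero μ) (not_isUnit_X_sub_C μ)).1
    ((mul_dvd_mul_iff_right hq0).1 hdvd)

theorem exists_mem_genEigenspace_succ_notMem (hA : IsIntegral K A)
    (hμ : n + 1 = (minpoly K A).rootMultiplicity μ) :
    ∃ v ∈ A.genEigenspace μ (n + 1 : ℕ), v ∉ A.genEigenspace μ n := by
  have hnot : ¬ A.maxGenEigenspace μ ≤ A.genEigenspace μ n := by
    rw [← rootMultiplicity_minpoly_le_iff_maxGenEigenspace_le hA]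
    lia
  obtain ⟨v, hv, hvn⟩ := SetLike.not_le_iff_exists.1 hnot
  exact ⟨v, hμ ▸ maxGenEigenspace_le_genEigenspace_rootMultiplicity_minpoly hA μ hv, hvn⟩

theorem rootMultiplicity_minpoly_le_of_sup_eq_top (hA : IsIntegral K A)
    (h : A.genEigenspace μ n ⊔ ⨆ ν ≠ μ, A.maxGenEigenspace ν = ⊤) :
    (minpoly K A).rootMultiplicity μ ≤ n := by
  rw [rootMultiplicity_minpoly_le_iff_maxGenEigenspace_le hA]
  exact ((le_iff_eq_of_codisjoint_of_disjoint (codisjoint_iff.2 h)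
    (A.independent_maxGenEigenspace μ).symm).1 (genEigenspace_le_maximal A μ n)).ge

theorem ker_aeval_prod_X_sub_C_pow_le_iSup (A : Module.End K V) (s : Finset K) (m : K → ℕ) :
    LinearMap.ker (aeval A (∏ a ∈ s, (X - C a) ^ m a)) ≤ ⨆ a, A.genEigenspace a (m a) := by
  classical
  induction s using Finset.induction_on with
  | empty => simp [Module.End.one_eq_id]
  | insert a s ha ih =>
    have hcoprime : IsCoprime ((X - C a) ^ m a) (∏ b ∈ s, (X - C b) ^ m b) :=
      IsCoprime.prod_right fun b hb ↦
        (pairwise_coprime_X_sub_C Function.injective_id (ne_of_mem_of_not_mem hb ha).symm).pow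
    rw [Finset.prod_insert ha, ← sup_ker_aeval_eq_ker_aeval_mul_of_coprime A hcoprime,
      ker_aeval_X_sub_C_pow]
    exact sup_le (le_iSup (fun a ↦ A.genEigenspace a (m a)) a) ih

theorem iSup_genEigenspace_rootMultiplicity_minpoly_eq_top (hsplit : (minpoly K A).Splits)
    (hA : IsIntegral K A) :
    ⨆ μ, A.genEigenspace μ ((minpoly K A).rootMultiplicity μ) = ⊤ := by
  classical
  have hprod : minpoly K A =
      ∏ μ ∈ (minpoly K A).roots.toFinset, (X - C μ) ^ (minpoly K A).rootMultiplicity μ := by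
    conv_lhs => rw [hsplit.eq_prod_roots_of_monic (minpoly.monic hA)]
    simp only [Finset.prod_multiset_map_count, count_roots]
  rw [eq_top_iff]
  calc ⊤ = LinearMap.ker (aeval A (minpoly K A)) := by rw [minpoly.aeval, LinearMap.ker_zero]
    _ ≤ _ := by
      conv_lhs => rw [hprod]
      exact ker_aeval_prod_X_sub_C_pow_le_iSup A _ _

end GeneralizedEigenspaces

section Commute

open scoped IsMulCommutative in
theorem isIntegral_add_of_commute {R A : Type*} [CommRing R] [Ring A] [Algebra R A] {x y : A}
    (hxy : Commute x y) (hx : IsIntegral R x) (hy : IsIntegral R y) : IsIntegral R (x + y) := by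
  have hcomm : ∀ a ∈ ({x, y} : Set A), ∀ b ∈ ({x, y} : Set A), a * b = b * a := by
    rintro a (rfl | rfl) b (rfl | rfl)
    exacts [rfl, hxy, hxy.symm, rfl]
  have := Algebra.isMulCommutative_adjoin R hcomm
  let S := Algebra.adjoin R ({x, y} : Set A)
  let x' : S := ⟨x, Algebra.subset_adjoin (by simp)⟩
  let y' : S := ⟨y, Algebra.subset_adjoin (by simp)⟩
  have hval : Function.Injective S.val := Subtype.val_injective
  have hx' : IsIntegral R x' := (isIntegral_algHom_iff S.val hval).1 hx
  have hy' : IsIntegral R y' := (isIntegral_algHom_iff S.val hval).1 hy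
  exact (hx'.add hy').map S.val

variable {R M : Type*} [CommSemiring R] [AddCommMonoid M] [Module R M] {f g : Module.End R M}
  {v : M} {k l n : ℕ}

theorem pow_mul_pow_apply_eq_zero_of_commute (hfg : Commute f g) (hf : (f ^ k) v = 0)
    (hg : (g ^ l) v = 0) {i j : ℕ} (hij : k ≤ i ∨ l ≤ j) : (f ^ i * g ^ j) v = 0 := by
  rcases hij with hi | hj
  · rw [(hfg.pow_pow i j).eq, Module.End.mul_apply, Module.End.pow_map_zero_of_le hi hf, map_zero]
  · rw [Module.End.mul_apply, Module.End.pow_map_zero_of_le hj hg, map_zero]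

theorem add_pow_apply_eq_zero_of_commute (hfg : Commute f g) (hf : (f ^ k) v = 0)
    (hg : (g ^ l) v = 0) (hn : k + l ≤ n + 1) : ((f + g) ^ n) v = 0 := by
  rw [hfg.add_pow', LinearMap.sum_apply]
  refine Finset.sum_eq_zero fun ⟨i, j⟩ hij ↦ ?_
  rw [Finset.HasAntidiagonal.mem_antidiagonal] at hij
  rw [LinearMap.smul_apply, pow_mul_pow_apply_eq_zero_of_commute hfg hf hg (by lia), smul_zero]

theorem add_pow_add_apply_of_commute (hfg : Commute f g) (hf : (f ^ (k + 1)) v = 0)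
    (hg : (g ^ (l + 1)) v = 0) :
    ((f + g) ^ (k + l)) v = (k + l).choose k • (f ^ k * g ^ l) v := by
  rw [hfg.add_pow', LinearMap.sum_apply, Finset.sum_eq_single (k, l), LinearMap.smul_apply]
  · rintro ⟨i, j⟩ hij hne
    rw [Finset.HasAntidiagonal.mem_antidiagonal] at hij
    have hlt : k + 1 ≤ i ∨ l + 1 ≤ j := by
      by_contra! h
      exact hne (Prod.ext (by lia) (by lia))
    rw [LinearMap.smul_apply, pow_mul_pow_apply_eq_zero_of_commute hfg hf hg hlt, smul_zero]
  · simp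

end Commute

theorem tmul_ne_zero {K V W : Type*} [Field K] [AddCommGroup V] [Module K V] [AddCommGroup W]
    [Module K W] {v : V} {w : W} (hv : v ≠ 0) (hw : w ≠ 0) : v ⊗ₜ[K] w ≠ 0 := by
  obtain ⟨f, hf⟩ := not_forall.1 (mt (Module.forall_dual_apply_eq_zero_iff K v).1 hv)
  obtain ⟨g, hg⟩ := not_forall.1 (mt (Module.forall_dual_apply_eq_zero_iff K w).1 hw)
  intro h
  apply mul_ne_zero hf hg
  simpa using congr(TensorProduct.dualDistrib K V W (f ⊗ₜ g) $h)

/-- The Kronecker sum `A₁ ⊗ id + id ⊗ A₂` of two endomorphisms, whose minimal polynomial is the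
object of study. -/
noncomputable def kroneckerSum {R M₁ M₂ : Type*} [CommSemiring R] [AddCommMonoid M₁]
    [AddCommMonoid M₂] [Module R M₁] [Module R M₂] (A₁ : Module.End R M₁) (A₂ : Module.End R M₂) :
    Module.End R (M₁ ⊗[R] M₂) :=
  A₁.rTensor M₂ + A₂.lTensor M₁

namespace kroneckerSum

open Module.End

theorem commute_rTensor_lTensor {R M₁ M₂ : Type*} [CommSemiring R] [AddCommMonoid M₁]
    [AddCommMonoid M₂] [Module R M₁] [Module R M₂] (A₁ : Module.End R M₁) (A₂ : Module.End R M₂) :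
    Commute (A₁.rTensor M₂) (A₂.lTensor M₁) :=
  (LinearMap.rTensor_comp_lTensor _ A₁ A₂).trans
    (LinearMap.lTensor_comp_rTensor _ A₁ A₂).symm

section CommRing

variable {R M₁ M₂ : Type*} [CommRing R] [AddCommGroup M₁] [AddCommGroup M₂] [Module R M₁]
  [Module R M₂] {A₁ : Module.End R M₁} {A₂ : Module.End R M₂} {v₁ : M₁} {v₂ : M₂} {α β : R}
  {k l n : ℕ}

theorem isIntegral (h₁ : IsIntegral R A₁) (h₂ : IsIntegral R A₂) :
    IsIntegral R (kroneckerSum A₁ A₂) :=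
  isIntegral_add_of_commute (commute_rTensor_lTensor A₁ A₂) (h₁.map (rTensorAlgHom R M₁ M₂))
    (h₂.map (lTensorAlgHom R M₂ M₁))

theorem sub_add_smul_one (A₁ : Module.End R M₁) (A₂ : Module.End R M₂) (α β : R) :
    kroneckerSum A₁ A₂ - (α + β) • 1 = kroneckerSum (A₁ - α • 1) (A₂ - β • 1) := by
  simp only [kroneckerSum, LinearMap.rTensor_sub, LinearMap.lTensor_sub, LinearMap.rTensor_smul,
    LinearMap.lTensor_smul, Module.End.one_eq_id, LinearMap.rTensor_id, LinearMap.lTensor_id,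
    add_smul]
  abel

theorem tmul_mem_genEigenspace (h₁ : v₁ ∈ A₁.genEigenspace α k) (h₂ : v₂ ∈ A₂.genEigenspace β l)
    (hn : k + l ≤ n + 1) : v₁ ⊗ₜ[R] v₂ ∈ (kroneckerSum A₁ A₂).genEigenspace (α + β) n := by
  rw [mem_genEigenspace_nat, LinearMap.mem_ker] at h₁ h₂ ⊢
  rw [sub_add_smul_one]
  refine add_pow_apply_eq_zero_of_commute (commute_rTensor_lTensor _ _) ?_ ?_ hn
  · rw [LinearMap.rTensor_pow, LinearMap.rTensor_tmul, h₁, TensorProduct.zero_tmul]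
  · rw [LinearMap.lTensor_pow, LinearMap.lTensor_tmul, h₂, TensorProduct.tmul_zero]

theorem sub_smul_one_pow_add_tmul (h₁ : v₁ ∈ A₁.genEigenspace α (k + 1 : ℕ))
    (h₂ : v₂ ∈ A₂.genEigenspace β (l + 1 : ℕ)) :
    ((kroneckerSum A₁ A₂ - (α + β) • 1) ^ (k + l)) (v₁ ⊗ₜ[R] v₂) =
      (k + l).choose k • ((A₁ - α • 1) ^ k) v₁ ⊗ₜ[R] ((A₂ - β • 1) ^ l) v₂ := by
  rw [mem_genEigenspace_nat, LinearMap.mem_ker] at h₁ h₂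
  rw [sub_add_smul_one, kroneckerSum,
    add_pow_add_apply_of_commute (commute_rTensor_lTensor _ _),
    Module.End.mul_apply, LinearMap.rTensor_pow, LinearMap.lTensor_pow, LinearMap.lTensor_tmul,
    LinearMap.rTensor_tmul]
  · rw [LinearMap.rTensor_pow, LinearMap.rTensor_tmul, h₁, TensorProduct.zero_tmul]
  · rw [LinearMap.lTensor_pow, LinearMap.lTensor_tmul, h₂, TensorProduct.tmul_zero]

end CommRing

section Field

variable {K V₁ V₂ : Type*} [Field K] [AddCommGroup V₁] [AddCommGroup V₂] [Module K V₁]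
  [Module K V₂] {A₁ : Module.End K V₁} {A₂ : Module.End K V₂} {γ : K} {n : ℕ}

theorem rootMultiplicity_minpoly_add_sub_one_le [CharZero K] (h₁ : IsIntegral K A₁)
    (h₂ : IsIntegral K A₂) {α β : K} (hα : 0 < (minpoly K A₁).rootMultiplicity α)
    (hβ : 0 < (minpoly K A₂).rootMultiplicity β) :
    (minpoly K A₁).rootMultiplicity α + (minpoly K A₂).rootMultiplicity β - 1 ≤
      (minpoly K (kroneckerSum A₁ A₂)).rootMultiplicity (α + β) := by
  obtain ⟨k, hk⟩ := Nat.exists_eq_succ_of_ne_zero hα.ne'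
  obtain ⟨l, hl⟩ := Nat.exists_eq_succ_of_ne_zero hβ.ne'
  obtain ⟨v₁, hv₁, hv₁'⟩ := exists_mem_genEigenspace_succ_notMem h₁ hk.symm
  obtain ⟨v₂, hv₂, hv₂'⟩ := exists_mem_genEigenspace_succ_notMem h₂ hl.symm
  by_contra! hlt
  have hmax : v₁ ⊗ₜ[K] v₂ ∈ (kroneckerSum A₁ A₂).maxGenEigenspace (α + β) :=
    genEigenspace_le_maximal _ _ _ (tmul_mem_genEigenspace hv₁ hv₂ (Nat.le_succ _))
  have hkill : v₁ ⊗ₜ[K] v₂ ∈ (kroneckerSum A₁ A₂).genEigenspace (α + β) (k + l : ℕ) :=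
    (rootMultiplicity_minpoly_le_iff_maxGenEigenspace_le (isIntegral h₁ h₂)).1 (by lia) hmax
  rw [mem_genEigenspace_nat, LinearMap.mem_ker] at hv₁' hv₂' hkill
  rw [sub_smul_one_pow_add_tmul hv₁ hv₂, ← Nat.cast_smul_eq_nsmul K] at hkill
  have hchoose : ((k + l).choose k : K) ≠ 0 :=
    Nat.cast_ne_zero.2 (Nat.choose_pos (Nat.le_add_right k l)).ne'
  exact smul_ne_zero hchoose (tmul_ne_zero hv₁' hv₂') hkill

theorem genEigenspace_sup_iSup_maxGenEigenspace_eq_top {m₁ m₂ : K → ℕ}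
    (h₁ : ⨆ α, A₁.genEigenspace α (m₁ α) = ⊤) (h₂ : ⨆ β, A₂.genEigenspace β (m₂ β) = ⊤)
    (hn : ∀ α β, α + β = γ → 0 < m₁ α → 0 < m₂ β → m₁ α + m₂ β - 1 ≤ n) :
    (kroneckerSum A₁ A₂).genEigenspace γ n ⊔
      ⨆ δ ≠ γ, (kroneckerSum A₁ A₂).maxGenEigenspace δ = ⊤ := by
  rw [eq_top_iff, ← TensorProduct.map₂_mk_top_top_eq_top, ← h₁, ← h₂, Submodule.map₂_iSup_left]
  simp only [Submodule.map₂_iSup_right]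
  refine iSup₂_le fun α β ↦ Submodule.map₂_le.2 fun v₁ hv₁ v₂ hv₂ ↦ ?_
  rw [TensorProduct.mk_apply]
  obtain hγ | hγ := ne_or_eq (α + β) γ
  · have hmax := genEigenspace_le_maximal _ _ _
      (tmul_mem_genEigenspace hv₁ hv₂ (Nat.le_succ (m₁ α + m₂ β)))
    exact Submodule.mem_sup_right (Submodule.mem_iSup_of_mem _ (Submodule.mem_iSup_of_mem hγ hmax))
  · apply Submodule.mem_sup_left
    obtain hα | hα := Nat.eq_zero_or_pos (m₁ α)
    · have : v₁ = 0 := by simpa [hα] using hv₁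
      simp [this]
    obtain hβ | hβ := Nat.eq_zero_or_pos (m₂ β)
    · have : v₂ = 0 := by simpa [hβ] using hv₂
      simp [this]
    have := hn α β hγ hα hβ
    exact hγ ▸ tmul_mem_genEigenspace hv₁ hv₂ (by lia)

theorem rootMultiplicity_minpoly_le_iff [CharZero K] (h₁ : IsIntegral K A₁)
    (h₂ : IsIntegral K A₂) (hs₁ : (minpoly K A₁).Splits) (hs₂ : (minpoly K A₂).Splits) :
    (minpoly K (kroneckerSum A₁ A₂)).rootMultiplicity γ ≤ n ↔
      ∀ α β, α + β = γ → 0 < (minpoly K A₁).rootMultiplicity α →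
        0 < (minpoly K A₂).rootMultiplicity β →
        (minpoly K A₁).rootMultiplicity α + (minpoly K A₂).rootMultiplicity β - 1 ≤ n := by
  constructor
  · rintro hn α β rfl hα hβ
    exact (rootMultiplicity_minpoly_add_sub_one_le h₁ h₂ hα hβ).trans hn
  · exact fun hn ↦ rootMultiplicity_minpoly_le_of_sup_eq_top (isIntegral h₁ h₂)
      (genEigenspace_sup_iSup_maxGenEigenspace_eq_top
        (iSup_genEigenspace_rootMultiplicity_minpoly_eq_top hs₁ h₁)
        (iSup_genEigenspace_rootMultiplicity_minpoly_eq_top hs₂ h₂) hn)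

end Field

end kroneckerSum

theorem stmt_0_general {K V₁ V₂ : Type*} [Field K] [CharZero K] [AddCommGroup V₁] [AddCommGroup V₂]
    [Module K V₁] [Module K V₂] {A₁ : Module.End K V₁} {A₂ : Module.End K V₂}
    (h₁ : IsIntegral K A₁) (h₂ : IsIntegral K A₂)
    (hs₁ : (minpoly K A₁).Splits) (hs₂ : (minpoly K A₂).Splits) {m₁ m₂ : K → ℕ}
    (hm₁ : ∀ γ, m₁ γ = (minpoly K A₁).rootMultiplicity (-γ))
    (hm₂ : ∀ γ, m₂ γ = (minpoly K A₂).rootMultiplicity (-γ)) (γ : K) :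
    (minpoly K (kroneckerSum A₁ A₂)).rootMultiplicity (-γ) =
      sSup ((fun p : K × K ↦ m₁ p.1 + m₂ p.2 - 1) ''
        {p : K × K | p.1 + p.2 = γ ∧ 0 < m₁ p.1 ∧ 0 < m₂ p.2}) := by
  set S := (fun p : K × K ↦ m₁ p.1 + m₂ p.2 - 1) ''
    {p : K × K | p.1 + p.2 = γ ∧ 0 < m₁ p.1 ∧ 0 < m₂ p.2} with hS
  have hle_iff (n : ℕ) :
      (minpoly K (kroneckerSum A₁ A₂)).rootMultiplicity (-γ) ≤ n ↔ n ∈ upperBounds S := by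
    simp only [kroneckerSum.rootMultiplicity_minpoly_le_iff h₁ h₂ hs₁ hs₂, hS, mem_upperBounds,
      Set.forall_mem_image, Set.mem_ofPred_eq, Prod.forall, and_imp, hm₁, hm₂]
    refine ⟨fun h α β hγ ↦ h (-α) (-β) (by rw [← hγ, neg_add]), fun h α β hγ ↦ ?_⟩
    simpa only [neg_neg] using h (-α) (-β) (by rw [← neg_add, hγ, neg_neg])
  have hbdd : BddAbove S := ⟨_, (hle_iff _).1 le_rfl⟩
  exact eq_of_forall_ge_iff fun n ↦ (hle_iff n).trans (csSup_le_iff' hbdd).symm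

/-- The minimal polynomial of `A₁ ⊗ id + id ⊗ A₂` on `V₁ ⊗ V₂` is
`∏ (s+γ)^{m_γ}` where `m_γ = max { m¹_α + m²_β - 1 | m¹_α > 0, m²_β > 0, α + β = γ }`,
the minimal polynomials of `A₁, A₂` being `∏ (s+γ)^{m¹_γ}` and `∏ (s+γ)^{m²_γ}`.
Over the algebraically closed field `ℂ`, a monic polynomial is determined by its root
multiplicities, so we phrase everything in terms of `rootMultiplicity`. -/
theorem stmt_0
    (V₁ V₂ : Type*) [AddCommGroup V₁] [AddCommGroup V₂]
    [Module ℂ V₁] [Module ℂ V₂]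
    [FiniteDimensional ℂ V₁] [FiniteDimensional ℂ V₂]
    [Nontrivial V₁] [Nontrivial V₂]
    (A₁ : Module.End ℂ V₁) (A₂ : Module.End ℂ V₂)
    (m₁ m₂ : ℂ → ℕ)
    (hm₁ : ∀ γ : ℂ, m₁ γ = (minpoly ℂ A₁).rootMultiplicity (-γ))
    (hm₂ : ∀ γ : ℂ, m₂ γ = (minpoly ℂ A₂).rootMultiplicity (-γ))
    (T : Module.End ℂ (V₁ ⊗[ℂ] V₂))
    (hT : T = TensorProduct.map A₁ (LinearMap.id : V₂ →ₗ[ℂ] V₂)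
        + TensorProduct.map (LinearMap.id : V₁ →ₗ[ℂ] V₁) A₂) :
    ∀ γ : ℂ, (minpoly ℂ T).rootMultiplicity (-γ) =
      sSup ((fun p : ℂ × ℂ => m₁ p.1 + m₂ p.2 - 1) ''
        {p : ℂ × ℂ | p.1 + p.2 = γ ∧ 0 < m₁ p.1 ∧ 0 < m₂ p.2}) := by
  subst hT
  exact stmt_0_general (Algebra.IsIntegral.isIntegral A₁) (Algebra.IsIntegral.isIntegral A₂)
    (IsAlgClosed.splits _) (IsAlgClosed.splits _) hm₁ hm₂
end

section
/- Let $K = \mathbf C(x,y,z)$ be the fraction field of $\mathbf C[x,y,z]$, with $\partial_x, \partial_y, \partial_z$ the unique derivations of $K$ extending the partial derivatives on polynomials, and let $g = x^2+y^2+z^2$. Then in $K$ one has the Bernstein–Sato-type functional equation $(x\partial_x)\big((x\partial_x)(1/g)\big) = -x\Big(\partial_y\big(\partial_y(x/g)\big) + \partial_z\big(\partial_z(x/g)\big)\Big)$. -/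
open MvPolynomial

/-!
Write `E = x∂ₓ` and let `Δ = ∂ₓ² + ∂_y² + ∂_z²` be the Laplacian. As `∂_y` and `∂_z` kill `x` and
`E² = E + x²∂ₓ²`, the equation says `E(1/g) = -x² Δ(1/g)`. In `n` variables
`Δ(gᵏ) = 2k(2k + n - 2) gᵏ⁻¹` and `E(gᵏ) = 2k x² gᵏ⁻¹`, so that `(E + x² Δ)(gᵏ)` is
`2k(2k + n - 1) x² gᵏ⁻¹`, which vanishes for `n = 3` and `k = -1`.
-/

section Derivation

variable {R A : Type*} [CommSemiring R] [CommSemiring A] [Algebra R A]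

theorem derivation_derivation_mul_of_derivation_eq_zero (D : Derivation R A A) {a : A}
    (ha : D a = 0) (f : A) : D (D (a * f)) = a * D (D f) := by
  simp only [Derivation.leibniz, ha, smul_eq_mul, mul_zero, add_zero]

theorem mul_derivation_mul_derivation_of_derivation_eq_one (D : Derivation R A A) {a : A}
    (ha : D a = 1) (f : A) : a * D (a * D f) = a * D f + a ^ 2 * D (D f) := by
  simp only [Derivation.leibniz, ha, smul_eq_mul]
  ring

end Derivation

theorem derivation_derivation_zpow {R K : Type*} [CommRing R] [Field K] [Algebra R K]
    (D : Derivation R K K) (a : K) (k : ℤ) :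
    D (D (a ^ k)) = k * (k - 1) * a ^ (k - 2) * D a ^ 2 + k * a ^ (k - 1) * D (D a) := by
  have hk : k - 1 - 1 = k - 2 := by ring
  rw [Derivation.leibniz_zpow, map_zsmul]
  simp only [Derivation.leibniz, Derivation.leibniz_zpow, smul_eq_mul, zsmul_eq_mul, hk]
  push_cast
  ring

/-- The family `x` is a system of coordinates for the derivations `D`, which play the role of the
partial derivatives: `D i (x j)` is the Kronecker delta. -/
def IsCoordinateSystem {ι R A : Type*} [DecidableEq ι] [CommSemiring R] [CommSemiring A]
    [Algebra R A] (D : ι → Derivation R A A) (x : ι → A) : Prop :=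
  ∀ i j, D i (x j) = if i = j then 1 else 0

theorem isCoordinateSystem_algebraMap_X {ι R A : Type*} [DecidableEq ι] [CommSemiring R]
    [CommSemiring A] [Algebra R A] [Algebra (MvPolynomial ι R) A]
    {D : ι → Derivation R A A}
    (hD : ∀ i p, D i (algebraMap (MvPolynomial ι R) A p) = algebraMap _ A (pderiv i p)) :
    IsCoordinateSystem D fun i ↦ algebraMap (MvPolynomial ι R) A (X i) := by
  intro i j
  simp only [hD, pderiv_X, Pi.single_apply, eq_comm (a := j), apply_ite (algebraMap _ A), map_one,
    map_zero]

namespace IsCoordinateSystem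

section CommSemiring

variable {ι R A : Type*} [DecidableEq ι] [CommSemiring R] [CommSemiring A] [Algebra R A]
  {D : ι → Derivation R A A} {x : ι → A}

theorem derivation_self (h : IsCoordinateSystem D x) (i : ι) : D i (x i) = 1 := by
  rw [h i i, if_pos rfl]

theorem derivation_of_ne (h : IsCoordinateSystem D x) {i j : ι} (hij : i ≠ j) : D i (x j) = 0 := by
  rw [h i j, if_neg hij]

theorem derivation_sum_sq [Fintype ι] (h : IsCoordinateSystem D x) (i : ι) :
    D i (∑ j, x j ^ 2) = 2 * x i := by
  simp [Derivation.leibniz_pow, h i _]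

end CommSemiring

variable {ι R K : Type*} [Fintype ι] [DecidableEq ι] [CommRing R] [Field K] [Algebra R K]
  {D : ι → Derivation R K K} {x : ι → K}

theorem sum_sq_ne_zero [Nonempty ι] (h : IsCoordinateSystem D x) : ∑ j, x j ^ 2 ≠ 0 := by
  obtain ⟨i⟩ := ‹Nonempty ι›
  intro hg
  by_cases h2 : (2 : K) = 0
  · have : CharP K 2 := CharTwo.of_one_ne_zero_of_two_eq_zero one_ne_zero h2
    have hsum : ∑ j, x j = 0 := by
      rwa [← CharTwo.sum_sq, sq_eq_zero_iff] at hg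
    have hDi : D i (∑ j, x j) = 1 := by simp [h i _]
    exact one_ne_zero (by rw [← hDi, hsum, map_zero])
  · have hxi : x i = 0 := by simpa [hg, h2] using h.derivation_sum_sq i
    exact one_ne_zero (by rw [← h.derivation_self i, hxi, map_zero])

theorem derivation_zpow_sum_sq (h : IsCoordinateSystem D x) (i : ι) (k : ℤ) :
    D i ((∑ j, x j ^ 2) ^ k) = 2 * k * (∑ j, x j ^ 2) ^ (k - 1) * x i := by
  rw [Derivation.leibniz_zpow, h.derivation_sum_sq, zsmul_eq_mul, smul_eq_mul]
  ring

theorem derivation_derivation_zpow_sum_sq (h : IsCoordinateSystem D x) (i : ι) (k : ℤ) :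
    D i (D i ((∑ j, x j ^ 2) ^ k)) =
      4 * k * (k - 1) * (∑ j, x j ^ 2) ^ (k - 2) * x i ^ 2 + 2 * k * (∑ j, x j ^ 2) ^ (k - 1) := by
  have hD2 : D i (2 * x i) = 2 := by
    rw [two_mul, map_add, h.derivation_self, one_add_one_eq_two]
  rw [derivation_derivation_zpow, h.derivation_sum_sq, hD2]
  ring

theorem laplacian_zpow_sum_sq [Nonempty ι] (h : IsCoordinateSystem D x) (k : ℤ) :
    ∑ i, D i (D i ((∑ j, x j ^ 2) ^ k)) =
      2 * k * (2 * k + Fintype.card ι - 2) * (∑ j, x j ^ 2) ^ (k - 1) := by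
  have hpow : (∑ j, x j ^ 2) ^ (k - 2) * ∑ j, x j ^ 2 = (∑ j, x j ^ 2) ^ (k - 1) := by
    rw [← zpow_add_one₀ h.sum_sq_ne_zero]
    congr 1
    ring
  simp only [h.derivation_derivation_zpow_sum_sq, Finset.sum_add_distrib, ← Finset.mul_sum,
    Finset.sum_const, Finset.card_univ, nsmul_eq_mul]
  linear_combination 4 * (k : K) * (k - 1) * hpow

theorem euler_sq_add_sum_erase_zpow_sum_sq (h : IsCoordinateSystem D x) (i : ι) (k : ℤ) :
    x i * D i (x i * D i ((∑ l, x l ^ 2) ^ k)) +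
        x i * ∑ j ∈ Finset.univ.erase i, D j (D j (x i * (∑ l, x l ^ 2) ^ k)) =
      2 * k * (2 * k + Fintype.card ι - 1) * x i ^ 2 * (∑ l, x l ^ 2) ^ (k - 1) := by
  have : Nonempty ι := ⟨i⟩
  set f := (∑ l, x l ^ 2) ^ k with hf
  have hsum : ∑ j ∈ Finset.univ.erase i, D j (D j (x i * f)) =
      x i * ∑ j ∈ Finset.univ.erase i, D j (D j f) := by
    rw [Finset.mul_sum]
    refine Finset.sum_congr rfl fun j hj ↦ ?_
    exact derivation_derivation_mul_of_derivation_eq_zero (D j)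
      (h.derivation_of_ne (Finset.ne_of_mem_erase hj)) f
  have hlaplacian := Finset.add_sum_erase Finset.univ (fun j ↦ D j (D j f)) (Finset.mem_univ i)
  calc
    _ = x i * D i f + x i ^ 2 * ∑ j, D j (D j f) := by
      rw [mul_derivation_mul_derivation_of_derivation_eq_one _ (h.derivation_self i), hsum,
        ← hlaplacian]
      ring
    _ = _ := by
      rw [hf, h.derivation_zpow_sum_sq, h.laplacian_zpow_sum_sq]
      ring

end IsCoordinateSystem

theorem stmt_5_general {R K : Type*} [CommRing R] [Field K] [Algebra R K]
    {D : Fin 3 → Derivation R K K} {x : Fin 3 → K} (h : IsCoordinateSystem D x)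
    {g : K} (hg : g = x 0 ^ 2 + x 1 ^ 2 + x 2 ^ 2) :
    x 0 * D 0 (x 0 * D 0 (1 / g)) =
      -x 0 * (D 1 (D 1 (x 0 / g)) + D 2 (D 2 (x 0 / g))) := by
  have hg_sum : g = ∑ j, x j ^ 2 := by rw [hg, Fin.sum_univ_three]
  have herase : (Finset.univ.erase 0 : Finset (Fin 3)) = {1, 2} := by decide
  have hidentity := h.euler_sq_add_sum_erase_zpow_sum_sq 0 (-1)
  rw [← hg_sum, zpow_neg_one, herase, Finset.sum_pair (by decide), Fintype.card_fin] at hidentity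
  push_cast at hidentity
  rw [one_div, div_eq_mul_inv]
  linear_combination hidentity

/-- In `K = ℂ(x,y,z)` with `g = x² + y² + z²`, the Bernstein–Sato-type functional
equation `(x∂ₓ)((x∂ₓ)(1/g)) = -x (∂y(∂y(x/g)) + ∂z(∂z(x/g)))` holds. -/
theorem stmt_5
    (K : Type*) [Field K] [Algebra ℂ K]
    [Algebra (MvPolynomial (Fin 3) ℂ) K]
    [IsScalarTower ℂ (MvPolynomial (Fin 3) ℂ) K]
    [IsFractionRing (MvPolynomial (Fin 3) ℂ) K]
    (dx dy dz : Derivation ℂ K K)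
    (hdx : ∀ p : MvPolynomial (Fin 3) ℂ,
      dx (algebraMap (MvPolynomial (Fin 3) ℂ) K p) =
        algebraMap (MvPolynomial (Fin 3) ℂ) K (pderiv 0 p))
    (hdy : ∀ p : MvPolynomial (Fin 3) ℂ,
      dy (algebraMap (MvPolynomial (Fin 3) ℂ) K p) =
        algebraMap (MvPolynomial (Fin 3) ℂ) K (pderiv 1 p))
    (hdz : ∀ p : MvPolynomial (Fin 3) ℂ,
      dz (algebraMap (MvPolynomial (Fin 3) ℂ) K p) =
        algebraMap (MvPolynomial (Fin 3) ℂ) K (pderiv 2 p))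
    (x y z g : K)
    (hx : x = algebraMap (MvPolynomial (Fin 3) ℂ) K (X 0))
    (hy : y = algebraMap (MvPolynomial (Fin 3) ℂ) K (X 1))
    (hz : z = algebraMap (MvPolynomial (Fin 3) ℂ) K (X 2))
    (hg : g = x ^ 2 + y ^ 2 + z ^ 2) :
    x * dx (x * dx (1 / g)) = -x * (dy (dy (x / g)) + dz (dz (x / g))) := by
  subst hx hy hz
  exact stmt_5_general (D := ![dx, dy, dz])
    (isCoordinateSystem_algebraMap_X (by simp [Fin.forall_fin_succ, hdx, hdy, hdz])) hg
end

section
/- Let $n \geq 3$, let $K = \mathbf C(x_1,\dots,x_n)$ be the fraction field of $\mathbf C[x_1,\dots,x_n]$, with $\partial_{x_i}$ the unique derivation of $K$ extending the $i$-th partial derivative on polynomials, and let $g = x_1^2 + \cdots + x_n^2$. Then in $K$ one has the Bernstein–Sato-type functional equation $(x_1\partial_{x_1})\Big((x_1\partial_{x_1})(1/g) - (n-3)(1/g)\Big) = -x_1 \sum_{j=2}^{n} \partial_{x_j}\big(\partial_{x_j}(x_1/g)\big)$. -/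
open MvPolynomial

/-!
If `Δ` is the Laplacian and `f` satisfies `x₁ Δf = c ∂₁f`, then, since `x₁` commutes with `∂ⱼ` for
`j ≠ 1`, we get `x₁ ∑_{j ≠ 1} ∂ⱼ²(x₁ f) = x₁² (Δf - ∂₁²f) = c x₁ ∂₁f - x₁² ∂₁²f`, which is
`-x₁ ∂₁(x₁ ∂₁f - (c + 1) f)`. A power `f = gˢ` of `g = ∑ xⱼ²` has `∂₁f = 2s x₁ gˢ⁻¹` and
`Δf = 2s (2s + n - 2) gˢ⁻¹`, so it is such a function with `c = 2s + n - 2`; take `s = -1`.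
-/

section CommRing

variable {ι R A : Type*} [Fintype ι] [CommSemiring R] [CommRing A] [Algebra R A]

/-- The Laplace operator `∑ⱼ Dⱼ²` attached to a finite family of derivations `D`, which play the
role of the partial derivatives. -/
def derivationLaplacian (D : ι → Derivation R A A) (f : A) : A :=
  ∑ j, D j (D j f)

theorem mul_derivation_mul_derivation_sub_of_mul_laplacian_eq [DecidableEq ι]
    (D : ι → Derivation R A A) {i : ι} {y c f : A} (hi : D i y = 1) (hne : ∀ j ≠ i, D j y = 0)
    (hc : D i c = 0) (hf : y * derivationLaplacian D f = c * D i f) :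
    y * D i (y * D i f - (c + 1) * f) = -y * ∑ j ∈ Finset.univ.erase i, D j (D j (y * f)) := by
  have expand_left : D i (y * D i f - (c + 1) * f) = y * D i (D i f) - c * D i f := by
    simp only [map_sub, map_add, Derivation.leibniz, Derivation.map_one_eq_zero, hi, hc,
      smul_eq_mul]
    ring
  have commute : ∀ j ∈ Finset.univ.erase i, D j (D j (y * f)) = y * D j (D j f) := by
    intro j hj
    simp [hne j (Finset.ne_of_mem_erase hj)]
  have split : D i (D i f) + ∑ j ∈ Finset.univ.erase i, D j (D j f) = derivationLaplacian D f :=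
    Finset.add_sum_erase _ (fun j => D j (D j f)) (Finset.mem_univ i)
  rw [expand_left, Finset.sum_congr rfl commute, ← Finset.mul_sum]
  linear_combination y ^ 2 * split + y * hf

theorem derivation_sum_sq [DecidableEq ι] {D : ι → Derivation R A A} {x : ι → A}
    (hDx : ∀ i j, D i (x j) = if i = j then 1 else 0) (i : ι) :
    D i (∑ j, x j ^ 2) = 2 * x i := by
  simp [Derivation.leibniz_pow, hDx]

theorem sum_sq_ne_zero_of_derivation [DecidableEq ι] [Nonempty ι] [IsDomain A]
    {D : ι → Derivation R A A} {x : ι → A} (hDx : ∀ i j, D i (x j) = if i = j then 1 else 0) :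
    ∑ j, x j ^ 2 ≠ 0 := by
  intro hg
  obtain ⟨i⟩ := ‹Nonempty ι›
  have hxi : x i ≠ 0 := fun h => by simpa [h] using hDx i i
  have two_eq_zero : (2 : A) = 0 := by
    simpa [hg, hxi] using derivation_sum_sq hDx i
  -- In characteristic two `∑ xⱼ²` is the square of `∑ xⱼ`, on which `Dᵢ` takes the value `1`.
  have : CharP A 2 := CharTwo.of_one_ne_zero_of_two_eq_zero one_ne_zero two_eq_zero
  have hsum : ∑ j, x j = 0 := by
    rwa [← CharTwo.sum_sq, sq_eq_zero_iff] at hg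
  have map_sum_eq_one : D i (∑ j, x j) = 1 := by simp [hDx]
  simp [hsum] at map_sum_eq_one

end CommRing

section Field

variable {ι R K : Type*} [Fintype ι] [DecidableEq ι] [CommRing R] [Field K] [Algebra R K]
  {D : ι → Derivation R K K} {x : ι → K}

theorem derivation_sum_sq_zpow (hDx : ∀ i j, D i (x j) = if i = j then 1 else 0) (s : ℤ) (i : ι) :
    D i ((∑ j, x j ^ 2) ^ s) = 2 * s * x i * (∑ j, x j ^ 2) ^ (s - 1) := by
  rw [Derivation.leibniz_zpow, derivation_sum_sq hDx, zsmul_eq_mul, smul_eq_mul]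
  ring

theorem derivation_derivation_sum_sq_zpow (hDx : ∀ i j, D i (x j) = if i = j then 1 else 0)
    (s : ℤ) (i : ι) :
    D i (D i ((∑ j, x j ^ 2) ^ s)) =
      2 * s * (∑ j, x j ^ 2) ^ (s - 1) +
        4 * s * (s - 1) * (∑ j, x j ^ 2) ^ (s - 2) * x i ^ 2 := by
  have map_coeff : D i (2 * s : K) = 0 := by
    exact_mod_cast (D i).map_intCast (2 * s)
  simp only [derivation_sum_sq_zpow hDx, mul_assoc (2 * s : K), Derivation.leibniz, map_coeff, hDx,
    if_true, smul_eq_mul, show s - 1 - 1 = s - 2 by ring]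
  push_cast
  ring

theorem derivationLaplacian_sum_sq_zpow [Nonempty ι]
    (hDx : ∀ i j, D i (x j) = if i = j then 1 else 0) (s : ℤ) :
    derivationLaplacian D ((∑ j, x j ^ 2) ^ s) =
      2 * s * (2 * s + Fintype.card ι - 2) * (∑ j, x j ^ 2) ^ (s - 1) := by
  have mul_sum_sq : (∑ j, x j ^ 2) ^ (s - 2) * ∑ j, x j ^ 2 = (∑ j, x j ^ 2) ^ (s - 1) := by
    rw [← zpow_add_one₀ (sum_sq_ne_zero_of_derivation hDx), show s - 2 + 1 = s - 1 by ring]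
  simp only [derivationLaplacian, derivation_derivation_sum_sq_zpow hDx, Finset.sum_add_distrib,
    ← Finset.mul_sum, Finset.sum_const, Finset.card_univ, nsmul_eq_mul]
  linear_combination 4 * s * (s - 1) * mul_sum_sq

theorem stmt_8_general (hDx : ∀ i j, D i (x j) = if i = j then 1 else 0) (s : ℤ) (i : ι) :
    x i * D i (x i * D i ((∑ j, x j ^ 2) ^ s) -
        (2 * s + Fintype.card ι - 1) * (∑ j, x j ^ 2) ^ s) =
      -x i * ∑ j ∈ Finset.univ.erase i, D j (D j (x i * (∑ k, x k ^ 2) ^ s)) := by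
  have : Nonempty ι := ⟨i⟩
  have map_coeff : D i (2 * s + Fintype.card ι - 2 : K) = 0 := by
    exact_mod_cast (D i).map_intCast (2 * s + Fintype.card ι - 2)
  have laplace : x i * derivationLaplacian D ((∑ j, x j ^ 2) ^ s) =
      (2 * s + Fintype.card ι - 2) * D i ((∑ j, x j ^ 2) ^ s) := by
    rw [derivationLaplacian_sum_sq_zpow hDx, derivation_sum_sq_zpow hDx]
    ring
  have key := mul_derivation_mul_derivation_sub_of_mul_laplacian_eq D (by simp [hDx])
    (fun j hj => by simp [hDx, hj]) map_coeff laplace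
  rwa [show (2 * s + Fintype.card ι - 2 + 1 : K) = 2 * s + Fintype.card ι - 1 by ring] at key

end Field

/-- In `K = ℂ(x₁,…,xₙ)` (`n ≥ 3`) with `g = x₁² + ⋯ + xₙ²`, the
Bernstein–Sato-type functional equation
`(x₁∂₁)((x₁∂₁)(1/g) - (n-3)(1/g)) = -x₁ ∑_{j=2}^{n} ∂ⱼ(∂ⱼ(x₁/g))` holds.
Here `i₀` is the index of `x₁`. -/
theorem stmt_8
    (n : ℕ) (hn : 3 ≤ n)
    (K : Type*) [Field K] [Algebra ℂ K]
    [Algebra (MvPolynomial (Fin n) ℂ) K]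
    [IsScalarTower ℂ (MvPolynomial (Fin n) ℂ) K]
    [IsFractionRing (MvPolynomial (Fin n) ℂ) K]
    (D : Fin n → Derivation ℂ K K)
    (hD : ∀ (i : Fin n) (p : MvPolynomial (Fin n) ℂ),
      D i (algebraMap (MvPolynomial (Fin n) ℂ) K p) =
        algebraMap (MvPolynomial (Fin n) ℂ) K (pderiv i p))
    (x : Fin n → K)
    (hx : ∀ i, x i = algebraMap (MvPolynomial (Fin n) ℂ) K (X i))
    (g : K) (hg : g = ∑ i, x i ^ 2)
    (i₀ : Fin n) (hi₀ : (i₀ : ℕ) = 0) :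
    x i₀ * D i₀ (x i₀ * D i₀ (1 / g) - ((n : K) - 3) * (1 / g)) =
      -x i₀ * ∑ j ∈ Finset.univ.erase i₀, D j (D j (x i₀ / g)) := by
  have hDx (i j : Fin n) : D i (x j) = if i = j then 1 else 0 := by
    simp [hx, hD, pderiv_X, Pi.single_apply, eq_comm, apply_ite]
  have exponent : (2 * (-1 : ℤ) + n - 1 : K) = n - 3 := by push_cast; ring
  simpa only [← hg, zpow_neg_one, Fintype.card_fin, exponent, one_div, div_eq_mul_inv, one_mul]
    using stmt_8_general hDx (-1) i₀
end
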